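/- Let p ∈ (0,1) be fixed. For each n, let d(n) ∈ ℕ and α = α(n) ∈ ℝ^{d(n)} be a vector of nonnegative entries, normalized so that max_i α_i = 1. If (‖α‖₂/‖α‖₄)⁴ / n³ → ∞ as n → ∞, then the relative entropy (Kullback–Leibler divergence) Ent[W(n,α) || M(n)] converges to 0, where W(n,α) is the normalized off-diagonal Wishart matrix and M(n) is the symmetric matrix with independent standard Gaussian off-diagonal entries. -/

import Mathlib

open MeasureTheory ProbabilityTheory Real Filter
open scoped Classical ENNReal NNReal

noncomputable section

/-- Euclidean inner product on `Fin d → ℝ`. -/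
def dotp {d : ℕ} (x y : Fin d → ℝ) : ℝ := ∑ i, x i * y i

/-- The `q`-norm of a vector `α ∈ ℝ^d`. -/
def nrm {d : ℕ} (q : ℕ) (α : Fin d → ℝ) : ℝ := (∑ i, α i ^ q) ^ ((1 : ℝ) / q)

/-- The centered Gaussian measure `N(0, D_α)` on `ℝ^d`, `D_α = diag α`. -/
def gaussPi (d : ℕ) (α : Fin d → ℝ) : Measure (Fin d → ℝ) :=
  Measure.pi fun i => gaussianReal 0 (Real.toNNReal (α i))

/-- The law of `n` i.i.d. samples from `N(0, D_α)`. -/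
def sampleMeasure (n d : ℕ) (α : Fin d → ℝ) : Measure (Fin n → Fin d → ℝ) :=
  Measure.pi fun _ => gaussPi d α

/-- `t` is the `p`-th upper quantile of `⟨X₁, X₂⟩` for `X₁, X₂` i.i.d. `N(0, D_α)`. -/
def IsThreshold (d : ℕ) (α : Fin d → ℝ) (p t : ℝ) : Prop :=
  ((gaussPi d α).prod (gaussPi d α)) {xy | t ≤ dotp xy.1 xy.2} = ENNReal.ofReal p

instance (n : ℕ) : MeasurableSpace (SimpleGraph (Fin n)) := ⊤

/-- The anisotropic random geometric graph `G(n, p, α)`, with threshold `t = t_{p,α}`. -/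
def geomGraph (n d : ℕ) (α : Fin d → ℝ) (t : ℝ) : Measure (SimpleGraph (Fin n)) :=
  Measure.map (fun X => SimpleGraph.fromRel fun i j => t ≤ dotp (X i) (X j))
    (sampleMeasure n d α)

/-- The Erdős–Rényi random graph `G(n, p)`. -/
def erGraph (n : ℕ) (p : ℝ) : Measure (SimpleGraph (Fin n)) :=
  Measure.map (fun x => SimpleGraph.fromRel fun i j => x s(i, j) ≤ p)
    (Measure.pi fun _ : Sym2 (Fin n) => volume.restrict (Set.Icc (0 : ℝ) 1))

/-- Total variation distance between two measures. -/
def tvDist {Ω : Type*} [MeasurableSpace Ω] (μ ν : Measure Ω) : ℝ :=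
  ⨆ s : {s : Set Ω // MeasurableSet s}, |(μ s.1).toReal - (ν s.1).toReal|

/-- The law of the normalized off-diagonal Wishart matrix `W(n,α)`:
zero diagonal, off-diagonal entries `⟨γ_i, γ_j⟩ / ‖α‖₂` for rows `γ_i` i.i.d. `N(0, D_α)`. -/
def wishartOffDiag (n d : ℕ) (α : Fin d → ℝ) : Measure (Fin n → Fin n → ℝ) :=
  Measure.map (fun X i j => if i = j then 0 else dotp (X i) (X j) / nrm 2 α)
    (sampleMeasure n d α)

/-- The law of the symmetric matrix `M(n)` with zero diagonal and i.i.d. standard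
Gaussian entries above the diagonal. -/
def goeOffDiag (n : ℕ) : Measure (Fin n → Fin n → ℝ) :=
  Measure.map (fun (x : Sym2 (Fin n) → ℝ) i j => if i = j then 0 else x s(i, j))
    (Measure.pi fun _ : Sym2 (Fin n) => gaussianReal 0 1)

/-- Relative entropy `Ent[μ‖ν] = ∫ log (dμ/dν) dμ`. -/
def relEnt {Ω : Type*} [MeasurableSpace Ω] (μ ν : Measure Ω) : ℝ :=
  ∫ x, llr μ ν x ∂μ

/-!
Reveal the matrices one row at a time. By the chain rule, the relative entropy is at most the sum
over `m < n` of the expected relative entropy, with respect to the standard Gaussian on `ℝ^m`, of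
the new row `(⟨X_j, x⟩ / ‖α‖₂)_{j < m}` conditioned on the previous samples `X`: conditioning on `X`
rather than on the Wishart matrix can only increase the entropy, by the data processing inequality.
Given `X`, this row is Gaussian with a random covariance `C`, and its relative entropy is
`(tr C - m - log det C) / 2 ≤ (tr C - m) / 2 + (det C)^(-1/2) - 1`. Here `E tr C = m`, while writing
`(det C)^(-1/2)` as a Gaussian integral and exchanging it with the expectation gives
`E (det C)^(-1/2) = (2π)^(-m/2) ∫ ∏ᵢ (1 + (αᵢ / ‖α‖₂)² |v|²)^(-1/2) dv`.
As `∑ᵢ (αᵢ / ‖α‖₂)² = 1`, the integrand is close to `exp (-|v|² / 2)`, and the integral is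
`1 + O(m² δ)` up to an exponentially small error, with `δ = (‖α‖₄ / ‖α‖₂)⁴`. Summing over the rows
gives `O(n³ δ) → 0`.
-/

section InformationTheory

open InformationTheory

variable {𝓧 𝓨 𝓩 : Type*} [MeasurableSpace 𝓧] [MeasurableSpace 𝓨] [MeasurableSpace 𝓩]

lemma rnDeriv_compProd_right [MeasurableSpace.CountableOrCountablyGenerated 𝓧 𝓨]
    {μ : Measure 𝓧} [IsFiniteMeasure μ] {κ η : Kernel 𝓧 𝓨} [IsFiniteKernel κ] [IsFiniteKernel η]
    (hκη : ∀ᵐ x ∂μ, κ x ≪ η x) :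
    (μ ⊗ₘ κ).rnDeriv (μ ⊗ₘ η) =ᵐ[μ ⊗ₘ η] fun p => κ.rnDeriv η p.1 p.2 := by
  have hκ : κ =ᵐ[μ] η.withDensity (κ.rnDeriv η) := by
    filter_upwards [hκη] with x hx using (Kernel.withDensity_rnDeriv_eq hx).symm
  rw [Measure.compProd_congr hκ, Measure.compProd_withDensity (Kernel.measurable_rnDeriv κ η)]
  exact Measure.rnDeriv_withDensity _ (Kernel.measurable_rnDeriv κ η)

lemma klDiv_compProd_right_of_ac [MeasurableSpace.CountableOrCountablyGenerated 𝓧 𝓨]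
    {μ : Measure 𝓧} [IsFiniteMeasure μ] {κ η : Kernel 𝓧 𝓨} [IsFiniteKernel κ] [IsFiniteKernel η]
    (hκη : ∀ᵐ x ∂μ, κ x ≪ η x) :
    klDiv (μ ⊗ₘ κ) (μ ⊗ₘ η) = ∫⁻ x, klDiv (κ x) (η x) ∂μ := by
  have hmeas : Measurable fun p : 𝓧 × 𝓨 => ENNReal.ofReal (klFun (κ.rnDeriv η p.1 p.2).toReal) :=
    (measurable_klFun.comp (Kernel.measurable_rnDeriv κ η).ennreal_toReal).ennreal_ofReal
  calc klDiv (μ ⊗ₘ κ) (μ ⊗ₘ η)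
      = ∫⁻ p, ENNReal.ofReal (klFun ((μ ⊗ₘ κ).rnDeriv (μ ⊗ₘ η) p).toReal) ∂(μ ⊗ₘ η) :=
        klDiv_eq_lintegral_klFun_of_ac (Measure.absolutelyContinuous_compProd_right_iff.mpr hκη)
    _ = ∫⁻ p, ENNReal.ofReal (klFun (κ.rnDeriv η p.1 p.2).toReal) ∂(μ ⊗ₘ η) := by
        refine lintegral_congr_ae ?_
        filter_upwards [rnDeriv_compProd_right hκη] with p hp
        rw [hp]
    _ = ∫⁻ x, ∫⁻ y, ENNReal.ofReal (klFun (κ.rnDeriv η x y).toReal) ∂(η x) ∂μ :=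
        Measure.lintegral_compProd hmeas
    _ = ∫⁻ x, klDiv (κ x) (η x) ∂μ := by
        refine lintegral_congr_ae ?_
        filter_upwards [hκη] with x hx
        rw [klDiv_eq_lintegral_klFun_of_ac hx]
        refine lintegral_congr_ae ?_
        filter_upwards [Kernel.rnDeriv_eq_rnDeriv_measure (κ := κ) (η := η) (a := x)] with y hy
        rw [hy]

lemma klDiv_compProd_right [MeasurableSpace.CountableOrCountablyGenerated 𝓧 𝓨]
    (μ : Measure 𝓧) [IsFiniteMeasure μ] (κ η : Kernel 𝓧 𝓨) [IsFiniteKernel κ] [IsFiniteKernel η] :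
    klDiv (μ ⊗ₘ κ) (μ ⊗ₘ η) = ∫⁻ x, klDiv (κ x) (η x) ∂μ := by
  by_cases hκη : ∀ᵐ x ∂μ, κ x ≪ η x
  · exact klDiv_compProd_right_of_ac hκη
  · rw [klDiv_of_not_ac fun h => hκη (Measure.absolutelyContinuous_compProd_right_iff.mp h)]
    refine (top_unique ?_).symm
    have hS : MeasurableSet {x | ¬ κ x ≪ η x} :=
      (Kernel.measurableSet_absolutelyContinuous κ η).compl
    calc ∞ = ∫⁻ _ in {x | ¬ κ x ≪ η x}, ∞ ∂μ := by
          rw [setLIntegral_const, ENNReal.top_mul (by rwa [ae_iff] at hκη)]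
      _ = ∫⁻ x in {x | ¬ κ x ≪ η x}, klDiv (κ x) (η x) ∂μ :=
          setLIntegral_congr_fun hS fun x hx => (klDiv_of_not_ac hx).symm
      _ ≤ ∫⁻ x, klDiv (κ x) (η x) ∂μ := setLIntegral_le_lintegral _ _

/-- Processing the first coordinate only mixes the conditional laws of the second one, so by
convexity the conditional divergence does not increase. -/
lemma klDiv_map_prodMap_compProd_le [StandardBorelSpace 𝓨] [Nonempty 𝓨]
    (μ : Measure 𝓧) [IsProbabilityMeasure μ] (κ : Kernel 𝓧 𝓨) [IsMarkovKernel κ]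
    (ν : Measure 𝓩) [IsProbabilityMeasure ν] (ξ : Measure 𝓨) [IsProbabilityMeasure ξ]
    {f : 𝓧 → 𝓩} (hf : Measurable f) :
    klDiv ((μ ⊗ₘ κ).map (Prod.map f id)) (ν.prod ξ)
      ≤ klDiv (μ.map f) ν + ∫⁻ x, klDiv (κ x) ξ ∂μ := by
  have hF : Measurable (Prod.map f (id : 𝓨 → 𝓨)) := hf.prodMap measurable_id
  set ρ := (μ ⊗ₘ κ).map (Prod.map f id) with hρ
  have : IsProbabilityMeasure ρ := Measure.isProbabilityMeasure_map hF.aemeasurable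
  have hfst : ρ.fst = μ.map f := by
    rw [Measure.fst, hρ, Measure.map_map measurable_fst hF, show Prod.fst ∘ Prod.map f id =
      f ∘ Prod.fst from rfl, ← Measure.map_map hf measurable_fst, ← Measure.fst,
      Measure.fst_compProd]
  have hdis : μ.map f ⊗ₘ ρ.condKernel = ρ := by rw [← hfst, ρ.disintegrate]
  have hprod : (μ.map f).prod ξ = (μ.prod ξ).map (Prod.map f id) := by
    rw [← Measure.map_prod_map _ _ hf measurable_id, Measure.map_id]
  have : IsProbabilityMeasure (μ.map f) := Measure.isProbabilityMeasure_map hf.aemeasurable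
  calc klDiv ρ (ν.prod ξ)
      = klDiv (μ.map f ⊗ₘ ρ.condKernel) (ν ⊗ₘ Kernel.const 𝓩 ξ) := by
        rw [hdis, Measure.compProd_const]
    _ = klDiv (μ.map f) ν + klDiv ρ ((μ.map f).prod ξ) := by
        rw [klDiv_compProd_eq_add, hdis, Measure.compProd_const]
    _ ≤ klDiv (μ.map f) ν + klDiv (μ ⊗ₘ κ) (μ.prod ξ) := by
        rw [hprod]
        gcongr
        exact klDiv_map_le _ _ hF
    _ = _ := by rw [← Measure.compProd_const, klDiv_compProd_right]; rfl

end InformationTheory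

section Pi

open InformationTheory

variable {m : ℕ} {E : Fin m → Type*} [∀ i, MeasurableSpace (E i)]

lemma lintegral_pi_fin_prod_eq_prod (μ : ∀ i, Measure (E i)) [∀ i, SigmaFinite (μ i)]
    {f : ∀ i, E i → ℝ≥0∞} (hf : ∀ i, Measurable (f i)) :
    ∫⁻ x, ∏ i, f i (x i) ∂(Measure.pi μ) = ∏ i, ∫⁻ x, f i x ∂(μ i) := by
  induction m with
  | zero => simp
  | succ m ih =>
    rw [← (measurePreserving_piFinSuccAbove μ 0).symm.lintegral_comp (by fun_prop)]
    simp_rw [MeasurableEquiv.piFinSuccAbove_symm_apply, Fin.insertNthEquiv, Fin.prod_univ_succ,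
      Equiv.coe_fn_mk, Fin.insertNth_zero, Fin.cons_zero, Fin.cons_succ]
    refine (lintegral_prod_mul (μ := μ 0) (ν := Measure.pi fun i : Fin m => μ i.succ)
      (g := fun y => ∏ i, f i.succ (y i)) (hf 0).aemeasurable ?_).trans ?_
    · exact (Finset.measurable_fun_prod _ fun i _ =>
        (hf i.succ).comp (measurable_pi_apply i)).aemeasurable
    · rw [ih _ fun i => hf i.succ]

lemma klDiv_prod_le {𝓧 𝓨 : Type*} [MeasurableSpace 𝓧] [MeasurableSpace 𝓨]
    (μ ν : Measure 𝓧) [IsProbabilityMeasure μ] [IsFiniteMeasure ν]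
    (μ' ν' : Measure 𝓨) [IsProbabilityMeasure μ'] [IsProbabilityMeasure ν'] :
    klDiv (μ.prod μ') (ν.prod ν') ≤ klDiv μ ν + klDiv μ' ν' := by
  rw [← Measure.compProd_const, ← Measure.compProd_const, klDiv_compProd_eq_add,
    Measure.compProd_const, Measure.compProd_const, ← Measure.prod_swap,
    ← Measure.prod_swap (μ := ν') (ν := μ)]
  gcongr
  refine (klDiv_map_le _ _ measurable_swap).trans_eq ?_
  rw [← Measure.compProd_const, ← Measure.compProd_const, klDiv_compProd_left]

lemma klDiv_pi_fin_le (μ ν : ∀ i, Measure (E i))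
    [∀ i, IsProbabilityMeasure (μ i)] [∀ i, IsProbabilityMeasure (ν i)] :
    klDiv (Measure.pi μ) (Measure.pi ν) ≤ ∑ i, klDiv (μ i) (ν i) := by
  induction m with
  | zero =>
    rw [Measure.pi_of_empty μ default, Measure.pi_of_empty ν default, klDiv_self]
    exact zero_le
  | succ m ih =>
    have hμ := (measurePreserving_piFinSuccAbove μ 0).symm
    have hν := (measurePreserving_piFinSuccAbove ν 0).symm
    rw [← hμ.map_eq, ← hν.map_eq, Fin.sum_univ_succ]
    refine (klDiv_map_le _ _ hμ.measurable).trans ?_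
    exact (klDiv_prod_le _ _ _ _).trans (add_le_add_right (ih _ _) _)

end Pi

section Gaussian

lemma lintegral_exp_neg_mul_sq {a : ℝ} (ha : 0 ≤ a) :
    ∫⁻ x : ℝ, ENNReal.ofReal ((√(2 * π))⁻¹ * exp (-(1 / 2) * (a * x ^ 2)))
      = (ENNReal.ofReal √a)⁻¹ := by
  rcases ha.eq_or_lt with rfl | ha
  · simp [ENNReal.mul_top, pi_pos]
  have hpdf (x : ℝ) : (√(2 * π))⁻¹ * exp (-(1 / 2) * (a * x ^ 2))
      = (√a)⁻¹ * gaussianPDFReal 0 (toNNReal a⁻¹) x := by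
    rw [gaussianPDFReal, coe_toNNReal _ (by positivity), ← div_eq_mul_inv, sqrt_div (by positivity)]
    field_simp
    simp
  have hv : toNNReal a⁻¹ ≠ 0 := by simpa
  simp_rw [hpdf, ENNReal.ofReal_mul (inv_nonneg.mpr (sqrt_nonneg a))]
  rw [lintegral_const_mul' _ _ ENNReal.ofReal_ne_top, lintegral_gaussianPDFReal_eq_one 0 hv,
    mul_one, ENNReal.ofReal_inv_of_pos (sqrt_pos.mpr ha)]

lemma lintegral_exp_neg_mul_sq_gaussianReal (v : ℝ≥0) {a : ℝ} (ha : 0 ≤ a) :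
    ∫⁻ x, ENNReal.ofReal (exp (-(1 / 2) * (a * x ^ 2))) ∂(gaussianReal 0 v)
      = ENNReal.ofReal (√(1 + a * v))⁻¹ := by
  rcases eq_or_ne v 0 with rfl | hv
  · simp
  have hv' : (0 : ℝ) < v := by positivity
  have hpdf (x : ℝ) : gaussianPDFReal 0 v x * exp (-(1 / 2) * (a * x ^ 2))
      = (√v)⁻¹ * ((√(2 * π))⁻¹ * exp (-(1 / 2) * ((1 / v + a) * x ^ 2))) := by
    rw [gaussianPDFReal, sqrt_mul (by positivity), mul_assoc, ← exp_add]
    field_simp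
    ring_nf
  rw [gaussianReal_of_var_ne_zero _ hv,
    lintegral_withDensity_eq_lintegral_mul _ (by fun_prop) (by fun_prop)]
  simp_rw [Pi.mul_apply, gaussianPDF, ← ENNReal.ofReal_mul (gaussianPDFReal_nonneg _ _ _), hpdf,
    ENNReal.ofReal_mul (inv_nonneg.mpr (sqrt_nonneg (v : ℝ)))]
  rw [lintegral_const_mul' _ _ ENNReal.ofReal_ne_top, lintegral_exp_neg_mul_sq (by positivity),
    ← ENNReal.ofReal_inv_of_pos (by positivity), ← ENNReal.ofReal_mul (by positivity), ← mul_inv,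
    ← sqrt_mul hv'.le, mul_add, mul_one_div_cancel hv'.ne', mul_comm a]

end Gaussian

section GaussianReal

open InformationTheory

lemma integral_sq_gaussianReal (v : ℝ≥0) : ∫ x, x ^ 2 ∂(gaussianReal 0 v) = v := by
  rw [← variance_fun_id_gaussianReal (μ := 0) (v := v),
    variance_of_integral_eq_zero (by fun_prop) integral_id_gaussianReal]

lemma lintegral_sq_gaussianReal (v : ℝ≥0) :
    ∫⁻ x, ENNReal.ofReal (x ^ 2) ∂(gaussianReal 0 v) = v := by
  have hsq : Integrable (fun x : ℝ => x ^ 2) (gaussianReal 0 v) :=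
    (memLp_id_gaussianReal 2).integrable_sq
  rw [← ofReal_integral_eq_lintegral_ofReal hsq (ae_of_all _ fun x => sq_nonneg x),
    integral_sq_gaussianReal, ENNReal.ofReal_coe_nnreal]

lemma gaussianReal_eq_withDensity_exp {v : ℝ≥0} (hv : v ≠ 0) :
    gaussianReal 0 v = (gaussianReal 0 1).withDensity fun x =>
      ENNReal.ofReal (exp (1 / 2 * ((1 - (v : ℝ)⁻¹) * x ^ 2 - log v))) := by
  have hv' : (0 : ℝ) < v := by positivity
  rw [gaussianReal_of_var_ne_zero _ hv, gaussianReal_of_var_ne_zero _ one_ne_zero,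
    ← withDensity_mul _ (by fun_prop) (by fun_prop)]
  congr 1 with x
  rw [Pi.mul_apply, gaussianPDF, gaussianPDF, ← ENNReal.ofReal_mul (gaussianPDFReal_nonneg _ _ _),
    gaussianPDFReal, gaussianPDFReal, mul_assoc _ (exp _), ← exp_add, sqrt_mul (by positivity),
    ← exp_log (sqrt_pos.mpr hv'), log_sqrt hv'.le, mul_inv, ← exp_neg, mul_assoc, ← exp_add]
  simp only [NNReal.coe_one, mul_one]
  congr 3
  field_simp
  ring

lemma klDiv_gaussianReal {v : ℝ≥0} (hv : v ≠ 0) :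
    klDiv (gaussianReal 0 v) (gaussianReal 0 1) = ENNReal.ofReal (1 / 2 * (v - 1 - log v)) := by
  have hv' : (0 : ℝ) < v := by positivity
  have hdens := gaussianReal_eq_withDensity_exp hv
  have hac : gaussianReal 0 v ≪ gaussianReal 0 1 := by
    rw [hdens]; exact withDensity_absolutelyContinuous _ _
  have hsq : Integrable (fun x : ℝ => x ^ 2) (gaussianReal 0 v) :=
    (memLp_id_gaussianReal 2).integrable_sq
  have hllr : llr (gaussianReal 0 v) (gaussianReal 0 1) =ᵐ[gaussianReal 0 v]
      fun x => 1 / 2 * ((1 - (v : ℝ)⁻¹) * x ^ 2 - log v) := by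
    refine hac.ae_le ?_
    have hrn := Measure.rnDeriv_withDensity (gaussianReal 0 1) (f := fun x =>
      ENNReal.ofReal (exp (1 / 2 * ((1 - (v : ℝ)⁻¹) * x ^ 2 - log v)))) (by fun_prop)
    rw [← hdens] at hrn
    filter_upwards [hrn] with x hx
    rw [llr, hx, ENNReal.toReal_ofReal (exp_pos _).le, log_exp]
  have hint : Integrable (llr (gaussianReal 0 v) (gaussianReal 0 1)) (gaussianReal 0 v) :=
    (((hsq.const_mul _).sub (integrable_const _)).const_mul _).congr hllr.symm
  rw [klDiv_of_ac_of_integrable hac hint, integral_congr_ae hllr, integral_const_mul,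
    integral_sub (hsq.const_mul _) (integrable_const _), integral_const_mul,
    integral_sq_gaussianReal]
  simp only [integral_const, probReal_univ, one_smul, sub_mul, one_mul, add_sub_cancel_right,
    inv_mul_cancel₀ hv'.ne']

end GaussianReal

section GaussianPi

open Matrix

variable {ι κ : Type*} [Fintype ι] [Fintype κ]

lemma charFunDual_pi_gaussianReal [DecidableEq ι] (v : ι → ℝ≥0) (L : StrongDual ℝ (ι → ℝ)) :
    charFunDual (Measure.pi fun i => gaussianReal 0 (v i)) L
      = Complex.exp ((-(1 / 2) * ∑ i, v i * L (Pi.single i 1) ^ 2 : ℝ) : ℂ) := by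
  have hfactor (i : ι) : charFunDual (gaussianReal 0 (v i)) (L.comp (.single ℝ (fun _ => ℝ) i))
      = Complex.exp ((-(1 / 2) * (v i * L (Pi.single i 1) ^ 2) : ℝ) : ℂ) := by
    have hL : ⇑(L.comp (.single ℝ (fun _ => ℝ) i)) = fun x => L (Pi.single i 1) * x := by
      ext x
      have hx : (Pi.single i x : ι → ℝ) = x • Pi.single i 1 := by simp [← Pi.single_smul]
      simp [hx, mul_comm]
    rw [charFunDual_eq_charFun_map_one, hL, charFun_map_mul, charFun_gaussianReal]
    push_cast
    ring_nf
  simp_rw [charFunDual_pi, hfactor, ← Complex.exp_sum, ← Complex.ofReal_sum, Finset.mul_sum]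

lemma sum_mul_vecMul_sq [DecidableEq ι] (A : Matrix κ ι ℝ) (v : ι → ℝ) (t : κ → ℝ) :
    ∑ i, v i * (t ᵥ* A) i ^ 2 = t ⬝ᵥ ((A * diagonal v * Aᵀ) *ᵥ t) := by
  rw [← mulVec_mulVec, ← mulVec_mulVec, dotProduct_mulVec, mulVec_transpose]
  exact Finset.sum_congr rfl fun i _ => by rw [mulVec_diagonal]; ring

lemma charFunDual_map_mulVec_pi_gaussianReal [DecidableEq ι] [DecidableEq κ] (A : Matrix κ ι ℝ)
    (v : ι → ℝ≥0) (L : StrongDual ℝ (κ → ℝ)) :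
    charFunDual ((Measure.pi fun i => gaussianReal 0 (v i)).map (A *ᵥ ·)) L
      = Complex.exp ((-(1 / 2) * ((fun j => L (Pi.single j 1)) ⬝ᵥ
          ((A * diagonal (fun i => (v i : ℝ)) * Aᵀ) *ᵥ fun j => L (Pi.single j 1))) : ℝ) : ℂ) := by
  have hL (i : ι) : (L.comp A.mulVecLin.toContinuousLinearMap) (Pi.single i 1)
      = ((fun j => L (Pi.single j 1)) ᵥ* A) i := by
    have hcol : A *ᵥ Pi.single i 1 = ∑ j, A j i • Pi.single j (1 : ℝ) := by
      ext k
      simp [Finset.sum_apply, Pi.single_apply]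
    simp [hcol, vecMul, dotProduct, mul_comm]
  rw [show (A *ᵥ ·) = ⇑A.mulVecLin.toContinuousLinearMap from rfl, charFunDual_map,
    charFunDual_pi_gaussianReal, ← sum_mul_vecMul_sq]
  simp_rw [hL]

lemma measurable_mulVec {ι κ : Type*} [Fintype ι] (A : Matrix κ ι ℝ) : Measurable (A *ᵥ ·) :=
  measurable_pi_lambda _ fun _ =>
    Finset.measurable_fun_sum _ fun i _ => (measurable_pi_apply i).const_mul _

lemma map_mulVec_pi_gaussianReal_congr {κ ι' : Type*} [Finite κ] [Fintype ι'] [DecidableEq ι]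
    [DecidableEq ι']
    {A : Matrix κ ι ℝ} {B : Matrix κ ι' ℝ} {v : ι → ℝ≥0} {w : ι' → ℝ≥0}
    (h : A * diagonal (fun i => (v i : ℝ)) * Aᵀ = B * diagonal (fun i => (w i : ℝ)) * Bᵀ) :
    (Measure.pi fun i => gaussianReal 0 (v i)).map (A *ᵥ ·)
      = (Measure.pi fun i => gaussianReal 0 (w i)).map (B *ᵥ ·) := by
  have := Fintype.ofFinite κ
  have := Measure.isProbabilityMeasure_map (μ := Measure.pi fun i => gaussianReal 0 (v i))
    (measurable_mulVec A).aemeasurable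
  have := Measure.isProbabilityMeasure_map (μ := Measure.pi fun i => gaussianReal 0 (w i))
    (measurable_mulVec B).aemeasurable
  refine Measure.ext_of_charFunDual (funext fun L => ?_)
  rw [charFunDual_map_mulVec_pi_gaussianReal, charFunDual_map_mulVec_pi_gaussianReal, h]

end GaussianPi

section GaussianIntegral

open Matrix InformationTheory

variable {m : ℕ}

/-- The standard Gaussian measure on `ℝ^m`. -/
abbrev stdGaussPi (m : ℕ) : Measure (Fin m → ℝ) := Measure.pi fun _ => gaussianReal 0 1

/-- The normalized Gaussian integral `(2π)^(-m/2) ∫ exp (-⟨v, C v⟩ / 2) dv`, which for a positive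
semidefinite `C` is `(det C)^(-1/2)`, with the value `∞` when `C` is singular. Keeping it as an
integral lets its expectation over a random `C` be computed by Tonelli's theorem. -/
def gaussIntegral (C : Matrix (Fin m) (Fin m) ℝ) : ℝ≥0∞ :=
  ∫⁻ v : Fin m → ℝ, ENNReal.ofReal ((√(2 * π))⁻¹ ^ m * exp (-(1 / 2) * (v ⬝ᵥ (C *ᵥ v))))

lemma measurePreserving_mulVec_of_mem_orthogonalGroup {ι : Type*} [Fintype ι] [DecidableEq ι]
    {U : Matrix ι ι ℝ} (hU : U ∈ orthogonalGroup ι ℝ) :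
    MeasurePreserving (U *ᵥ ·) (volume : Measure (ι → ℝ)) volume := by
  have hdet : U.det * U.det = 1 := by
    simpa using congrArg det ((mem_orthogonalGroup_iff ι ℝ).mp hU)
  have hdet_abs : |U.det⁻¹| = 1 := by
    rcases mul_self_eq_one_iff.mp hdet with h | h <;> simp [h]
  refine ⟨measurable_mulVec U, ?_⟩
  have hmap :=
    Real.map_matrix_volume_pi_eq_smul_volume_pi (M := U) (left_ne_zero_of_mul_eq_one hdet)
  rw [hdet_abs, ENNReal.ofReal_one, one_smul] at hmap
  exact hmap

lemma gaussIntegral_orthogonal_conj {U : Matrix (Fin m) (Fin m) ℝ}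
    (hU : U ∈ orthogonalGroup (Fin m) ℝ) (C : Matrix (Fin m) (Fin m) ℝ) :
    gaussIntegral (U * C * Uᵀ) = gaussIntegral C := by
  have hquad (v : Fin m → ℝ) : v ⬝ᵥ ((U * C * Uᵀ) *ᵥ v) = (Uᵀ *ᵥ v) ⬝ᵥ (C *ᵥ (Uᵀ *ᵥ v)) := by
    rw [← mulVec_mulVec, ← mulVec_mulVec, dotProduct_mulVec, mulVec_transpose]
  simp_rw [gaussIntegral, hquad]
  have hUt : Uᵀ ∈ orthogonalGroup (Fin m) ℝ := by
    rw [mem_orthogonalGroup_iff, transpose_transpose]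
    exact (mem_orthogonalGroup_iff' (Fin m) ℝ).mp hU
  exact (measurePreserving_mulVec_of_mem_orthogonalGroup hUt).lintegral_comp
    (f := fun v => ENNReal.ofReal ((√(2 * π))⁻¹ ^ m * exp (-(1 / 2) * (v ⬝ᵥ (C *ᵥ v)))))
    (by fun_prop)

lemma gaussIntegral_diagonal {c : Fin m → ℝ} (hc : ∀ i, 0 ≤ c i) :
    gaussIntegral (diagonal c) = (ENNReal.ofReal (∏ i, √(c i)))⁻¹ := by
  have hprod (v : Fin m → ℝ) :
      ENNReal.ofReal ((√(2 * π))⁻¹ ^ m * exp (-(1 / 2) * (v ⬝ᵥ (diagonal c *ᵥ v))))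
        = ∏ i, ENNReal.ofReal ((√(2 * π))⁻¹ * exp (-(1 / 2) * (c i * v i ^ 2))) := by
    rw [← ENNReal.ofReal_prod_of_nonneg fun _ _ => by positivity, Finset.prod_mul_distrib,
      ← exp_sum, ← Finset.mul_sum, Finset.prod_const, Finset.card_univ, Fintype.card_fin]
    congr 4
    exact Finset.sum_congr rfl fun i _ => by rw [mulVec_diagonal]; ring
  rw [ENNReal.ofReal_prod_of_nonneg fun i _ => sqrt_nonneg _, ENNReal.prod_inv_distrib
    fun _ _ _ _ _ => Or.inr ENNReal.ofReal_ne_top]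
  simp_rw [gaussIntegral, hprod, ← lintegral_exp_neg_mul_sq (hc _)]
  exact lintegral_pi_fin_prod_eq_prod (fun _ => volume)
    (f := fun i x => ENNReal.ofReal ((√(2 * π))⁻¹ * exp (-(1 / 2) * (c i * x ^ 2))))
    fun i => by fun_prop

lemma exists_orthogonal_conj_diagonal_of_posSemidef {ι : Type*} [Fintype ι] [DecidableEq ι]
    {C : Matrix ι ι ℝ} (hC : C.PosSemidef) :
    ∃ U ∈ orthogonalGroup ι ℝ, ∃ c : ι → ℝ≥0, C = U * diagonal (fun i => (c i : ℝ)) * Uᵀ := by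
  refine ⟨hC.isHermitian.eigenvectorUnitary, hC.isHermitian.eigenvectorUnitary.2,
    fun i => toNNReal (hC.isHermitian.eigenvalues i), ?_⟩
  simpa [hC.eigenvalues_nonneg, star_eq_conjTranspose] using hC.isHermitian.spectral_theorem

lemma klDiv_pi_gaussianReal_add_le (c : Fin m → ℝ≥0) :
    klDiv (Measure.pi fun i => gaussianReal 0 (c i)) (stdGaussPi m) + ENNReal.ofReal (m / 2 + 1)
      ≤ ENNReal.ofReal ((∑ i, (c i : ℝ)) / 2) + (ENNReal.ofReal (∏ i, √(c i)))⁻¹ := by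
  by_cases hc : ∃ i, c i = 0
  · obtain ⟨i, hi⟩ := hc
    have hzero : ∏ i, √(c i : ℝ) = 0 := Finset.prod_eq_zero (Finset.mem_univ i) (by simp [hi])
    simp [hzero]
  push Not at hc
  have hc' (i : Fin m) : (0 : ℝ) < c i := by have := hc i; positivity
  have hprod : 0 < ∏ i, √(c i : ℝ) := Finset.prod_pos fun i _ => sqrt_pos.mpr (hc' i)
  have hlog : -(1 / 2) * ∑ i, log (c i) ≤ (∏ i, √(c i : ℝ))⁻¹ - 1 := by
    refine le_trans (le_of_eq ?_) (log_le_sub_one_of_pos (inv_pos.mpr hprod))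
    rw [log_inv, log_prod fun i _ => (sqrt_pos.mpr (hc' i)).ne', Finset.mul_sum,
      ← Finset.sum_neg_distrib]
    refine Finset.sum_congr rfl fun i _ => ?_
    rw [log_sqrt (hc' i).le]
    ring
  have hnonneg (i : Fin m) : 0 ≤ 1 / 2 * ((c i : ℝ) - 1 - log (c i)) := by
    linarith [log_le_sub_one_of_pos (hc' i)]
  calc
    _ ≤ (∑ i, klDiv (gaussianReal 0 (c i)) (gaussianReal 0 1)) + ENNReal.ofReal (m / 2 + 1) := by
      gcongr
      exact klDiv_pi_fin_le _ _
    _ = ENNReal.ofReal (∑ i, 1 / 2 * ((c i : ℝ) - 1 - log (c i)) + (m / 2 + 1)) := by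
      simp_rw [klDiv_gaussianReal (hc _)]
      rw [← ENNReal.ofReal_sum_of_nonneg fun i _ => hnonneg i,
        ENNReal.ofReal_add (Finset.sum_nonneg fun i _ => hnonneg i) (by positivity)]
    _ ≤ ENNReal.ofReal ((∑ i, (c i : ℝ)) / 2 + (∏ i, √(c i : ℝ))⁻¹) := by
      refine ENNReal.ofReal_le_ofReal ?_
      rw [← Finset.mul_sum, Finset.sum_sub_distrib, Finset.sum_sub_distrib]
      simp only [Finset.sum_const, Finset.card_univ, Fintype.card_fin, nsmul_eq_mul, mul_one]
      linarith
    _ = _ := by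
      rw [ENNReal.ofReal_add (by positivity) (by positivity), ENNReal.ofReal_inv_of_pos hprod]

lemma klDiv_map_mulVec_add_le {ι : Type*} [Fintype ι] [DecidableEq ι] (A : Matrix (Fin m) ι ℝ)
    {v : ι → ℝ≥0} {C : Matrix (Fin m) (Fin m) ℝ}
    (hC : A * diagonal (fun i => (v i : ℝ)) * Aᵀ = C) :
    klDiv ((Measure.pi fun i => gaussianReal 0 (v i)).map (A *ᵥ ·)) (stdGaussPi m)
        + ENNReal.ofReal (m / 2 + 1)
      ≤ ENNReal.ofReal (C.trace / 2) + gaussIntegral C := by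
  have hpsd : C.PosSemidef := by
    rw [← hC, ← conjTranspose_eq_transpose_of_trivial]
    exact (PosSemidef.diagonal fun i => (v i).2).mul_mul_conjTranspose_same A
  obtain ⟨U, hU, c, hUc⟩ := exists_orthogonal_conj_diagonal_of_posSemidef hpsd
  have hUU : U * Uᵀ = 1 := (mem_orthogonalGroup_iff (Fin m) ℝ).mp hU
  have hUU' : Uᵀ * U = 1 := (mem_orthogonalGroup_iff' (Fin m) ℝ).mp hU
  have hstd : stdGaussPi m = (stdGaussPi m).map (U *ᵥ ·) := by
    simpa using map_mulVec_pi_gaussianReal_congr (A := (1 : Matrix (Fin m) (Fin m) ℝ)) (B := U)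
      (v := fun _ => 1) (w := fun _ => 1) (by simp [hUU])
  have htrace : C.trace = ∑ i, (c i : ℝ) := by
    rw [hUc, trace_mul_comm, ← mul_assoc, hUU', one_mul, trace_diagonal]
  rw [map_mulVec_pi_gaussianReal_congr (hC.trans hUc), htrace, hUc,
    gaussIntegral_orthogonal_conj hU, gaussIntegral_diagonal fun i => (c i).coe_nonneg]
  refine le_trans ?_ (klDiv_pi_gaussianReal_add_le c)
  gcongr
  conv_lhs => rw [hstd]
  exact klDiv_map_le _ _ (measurable_mulVec U)

end GaussianIntegral

section WithDensityPi

lemma pi_fin_withDensity {m : ℕ} {E : Fin m → Type*} [∀ i, MeasurableSpace (E i)]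
    (μ : ∀ i, Measure (E i)) [∀ i, SigmaFinite (μ i)] {f : ∀ i, E i → ℝ≥0∞}
    (hf : ∀ i, Measurable (f i)) [∀ i, SigmaFinite ((μ i).withDensity (f i))] :
    Measure.pi (fun i => (μ i).withDensity (f i))
      = (Measure.pi μ).withDensity fun x => ∏ i, f i (x i) := by
  refine Measure.pi_eq fun s hs => ?_
  have hindicator (x : ∀ i, E i) : (Set.univ.pi s).indicator (fun x => ∏ i, f i (x i)) x
      = ∏ i, (s i).indicator (f i) (x i) := by
    by_cases hx : x ∈ Set.univ.pi s
    · rw [Set.indicator_of_mem hx]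
      exact Finset.prod_congr rfl fun i _ => (Set.indicator_of_mem (hx i trivial) _).symm
    · obtain ⟨i, hi⟩ : ∃ i, x i ∉ s i := by simpa using hx
      rw [Set.indicator_of_notMem hx, Finset.prod_eq_zero (Finset.mem_univ i)]
      exact Set.indicator_of_notMem hi _
  rw [withDensity_apply _ (.univ_pi hs), ← lintegral_indicator (.univ_pi hs)]
  simp_rw [hindicator]
  rw [lintegral_pi_fin_prod_eq_prod μ fun i => (hf i).indicator (hs i)]
  exact Finset.prod_congr rfl fun i _ => by
    rw [lintegral_indicator (hs i), withDensity_apply _ (hs i)]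

lemma stdGaussPi_eq_withDensity (m : ℕ) :
    stdGaussPi m = (volume : Measure (Fin m → ℝ)).withDensity fun v =>
      ENNReal.ofReal ((√(2 * π))⁻¹ ^ m * exp (-(1 / 2) * ∑ j, v j ^ 2)) := by
  have hpdf (v : Fin m → ℝ) : ∏ j, gaussianPDF 0 1 (v j)
      = ENNReal.ofReal ((√(2 * π))⁻¹ ^ m * exp (-(1 / 2) * ∑ j, v j ^ 2)) := by
    simp_rw [gaussianPDF]
    rw [← ENNReal.ofReal_prod_of_nonneg fun j _ => gaussianPDFReal_nonneg _ _ _]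
    simp_rw [gaussianPDFReal]
    rw [Finset.prod_mul_distrib, ← exp_sum, Finset.mul_sum, Finset.prod_const, Finset.card_univ,
      Fintype.card_fin]
    simp only [NNReal.coe_one, mul_one, sub_zero]
    congr 3
    exact Finset.sum_congr rfl fun j _ => by ring
  have : SigmaFinite ((volume : Measure ℝ).withDensity (gaussianPDF 0 1)) := by
    rw [← gaussianReal_of_var_ne_zero 0 one_ne_zero]; infer_instance
  simp_rw [stdGaussPi, gaussianReal_of_var_ne_zero 0 one_ne_zero]
  rw [pi_fin_withDensity (fun _ => volume) fun _ => measurable_gaussianPDF 0 1]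
  simp_rw [hpdf]
  rfl

end WithDensityPi

section ProductBound

variable {ι : Type*} [Fintype ι] {a : ι → ℝ} {s N : ℝ}

lemma inv_sqrt_one_add_le_exp {x : ℝ} (hx : 0 ≤ x) :
    (√(1 + x))⁻¹ ≤ exp (-(1 / 2) * x + x ^ 2 / 4) := by
  have hlog : x - x ^ 2 / 2 ≤ log (1 + x) := by
    refine le_trans ?_ (le_log_one_add_of_nonneg hx)
    rw [le_div_iff₀ (by positivity)]
    nlinarith [pow_nonneg hx 3]
  rw [← exp_log (show 0 < (√(1 + x))⁻¹ by positivity), exp_le_exp, log_inv,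
    log_sqrt (by positivity)]
  linarith

lemma prod_inv_sqrt_one_add_le_of_sq_le (ha : ∀ i, 0 ≤ a i) (ha_sum : ∑ i, a i = 1) (hs : 0 ≤ s)
    (hs_sq : (∑ i, a i ^ 2) * s ^ 2 ≤ 1) :
    ∏ i, (√(1 + a i * s))⁻¹ ≤ exp (-(1 / 2) * s) * (1 + (∑ i, a i ^ 2) / 2 * s ^ 2) := by
  have hexp {y : ℝ} (hy : 0 ≤ y) (hy' : y ≤ 1) : exp y ≤ 1 + 2 * y := by
    have := (abs_le.mp (abs_exp_sub_one_le (x := y) (by rwa [abs_of_nonneg hy]))).2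
    rw [abs_of_nonneg hy] at this
    linarith
  calc
    _ ≤ ∏ i, exp (-(1 / 2) * (a i * s) + (a i * s) ^ 2 / 4) :=
      Finset.prod_le_prod (fun i _ => by positivity)
        fun i _ => inv_sqrt_one_add_le_exp (mul_nonneg (ha i) hs)
    _ = exp (-(1 / 2) * s) * exp ((∑ i, a i ^ 2) * s ^ 2 / 4) := by
      rw [← exp_sum, ← exp_add, Finset.sum_add_distrib, ← Finset.mul_sum, ← Finset.sum_mul,
        ha_sum, one_mul, ← Finset.sum_div, Finset.sum_mul]
      simp_rw [mul_pow]
    _ ≤ exp (-(1 / 2) * s) * (1 + 2 * ((∑ i, a i ^ 2) * s ^ 2 / 4)) := by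
      gcongr
      exact hexp (by positivity) (by linarith)
    _ = _ := by ring

lemma rpow_one_add_div_le_prod (ha : ∀ i, 0 ≤ a i) (ha_sum : ∑ i, a i = 1) (hN : 0 < N)
    (haN : ∀ i, a i * N ≤ 1) (hs : 0 ≤ s) :
    (1 + s / N) ^ N ≤ ∏ i, (1 + a i * s) := by
  have hpos : 0 < 1 + s / N := by positivity
  calc
    _ = ∏ i, (1 + s / N) ^ (a i * N) := by
      rw [← rpow_sum_of_pos hpos, ← Finset.sum_mul, ha_sum, one_mul]
    _ ≤ _ := by
      refine Finset.prod_le_prod (fun i _ => by positivity) fun i _ => ?_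
      refine (rpow_one_add_le_one_add_mul_self (by linarith) (mul_nonneg (ha i) hN.le)
        (haN i)).trans_eq ?_
      field_simp

lemma exp_mul_one_add_div_pow_le_rpow {n : ℕ} (hn : n ≠ 0) (hnN : 4 * n ≤ N) (hsN : N ≤ s) :
    exp (N / 8) * (1 + s / (4 * n)) ^ n ≤ (1 + s / N) ^ (N / 2) := by
  have hn' : (0 : ℝ) < n := by positivity
  have hN : 0 < N := by linarith
  have hs : 0 ≤ s := by linarith
  have hpos : 0 < 1 + s / N := by positivity
  have htwo : 2 ≤ 1 + s / N := by
    have : 1 ≤ s / N := (one_le_div hN).mpr hsN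
    linarith
  have hexp : exp (N / 8) ≤ (1 + s / N) ^ (N / 4) := by
    calc
      exp (N / 8) ≤ (2 : ℝ) ^ (N / 4) := by
        rw [rpow_def_of_pos two_pos, exp_le_exp]
        nlinarith [log_two_gt_d9]
      _ ≤ _ := by gcongr
  have hpow : (1 + s / (4 * n)) ^ n ≤ (1 + s / N) ^ (N / 4) := by
    have hbase : 1 + s / (4 * n) ≤ (1 + s / N) ^ (N / (4 * n)) := by
      refine le_trans (le_of_eq ?_) (one_add_mul_self_le_rpow_one_add (by linarith) ?_)
      · field_simp
      · rwa [one_le_div (by positivity)]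
    calc
      _ ≤ ((1 + s / N) ^ (N / (4 * n))) ^ n := by gcongr
      _ = _ := by
        rw [← rpow_natCast, ← rpow_mul hpos.le]
        congr 1
        field_simp
  calc
    _ ≤ (1 + s / N) ^ (N / 4) * (1 + s / N) ^ (N / 4) := by gcongr
    _ = _ := by
      rw [← rpow_add hpos]
      congr 1
      ring

lemma prod_inv_sqrt_one_add_le_of_le {n : ℕ} (hn : n ≠ 0) (ha : ∀ i, 0 ≤ a i)
    (ha_sum : ∑ i, a i = 1) (haN : ∀ i, a i * N ≤ 1) (hnN : 4 * n ≤ N) (hsN : N ≤ s) :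
    ∏ i, (√(1 + a i * s))⁻¹ ≤ exp (-(N / 8)) * ((1 + s / (4 * n)) ^ n)⁻¹ := by
  have hN : 0 < N := lt_of_lt_of_le (by positivity) hnN
  have hs : 0 < s := hN.trans_le hsN
  have hsqrt : exp (N / 8) * (1 + s / (4 * n)) ^ n ≤ ∏ i, √(1 + a i * s) := by
    calc
      _ ≤ (1 + s / N) ^ (N / 2) := exp_mul_one_add_div_pow_le_rpow hn hnN hsN
      _ = √((1 + s / N) ^ N) := by
        rw [sqrt_eq_rpow, ← rpow_mul (by positivity), mul_one_div]
      _ ≤ √(∏ i, (1 + a i * s)) := sqrt_le_sqrt (rpow_one_add_div_le_prod ha ha_sum hN haN hs.le)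
      _ = _ := by
        simp_rw [sqrt_eq_rpow]
        exact (finsetProd_rpow _ _ (fun i _ => by have := ha i; positivity) _).symm
  rw [Finset.prod_inv_distrib, exp_neg, ← mul_inv]
  gcongr

lemma inv_one_add_sum_sq_div_pow_le_prod {m n : ℕ} (hmn : m ≤ n) {c : ℝ} (hc : 0 ≤ c)
    (v : Fin m → ℝ) :
    ((1 + (∑ j, v j ^ 2) / c) ^ n)⁻¹ ≤ ∏ j, (1 + v j ^ 2 / c)⁻¹ := by
  rw [Finset.prod_inv_distrib]
  refine inv_anti₀ (Finset.prod_pos fun j _ => by positivity) ?_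
  calc
    _ ≤ ∏ _j : Fin m, (1 + (∑ j, v j ^ 2) / c) := by
      refine Finset.prod_le_prod (fun j _ => by positivity) fun j _ => ?_
      gcongr
      exact Finset.single_le_sum (f := fun j => v j ^ 2) (fun i _ => sq_nonneg _)
        (Finset.mem_univ j)
    _ = (1 + (∑ j, v j ^ 2) / c) ^ m := by simp
    _ ≤ _ := pow_le_pow_right₀ (le_add_of_nonneg_right (by positivity)) hmn

/- For `|v|² ≤ N` the product is close to the Gaussian weight `exp (-|v|² / 2)`; beyond `N` it is
only polynomially small in `v`, but with the exponentially small factor `exp (-N / 8)`. -/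
lemma prod_inv_sqrt_one_add_sum_sq_le {m n : ℕ} (hn : n ≠ 0) (hmn : m ≤ n) (ha : ∀ i, 0 ≤ a i)
    (ha_sum : ∑ i, a i = 1) (hN_sq : (∑ i, a i ^ 2) * N ^ 2 ≤ 1) (haN : ∀ i, a i * N ≤ 1)
    (hnN : 4 * n ≤ N) (v : Fin m → ℝ) :
    ∏ i, (√(1 + a i * ∑ j, v j ^ 2))⁻¹
      ≤ exp (-(1 / 2) * ∑ j, v j ^ 2) * (1 + (∑ i, a i ^ 2) / 2 * m * ∑ j, v j ^ 4)
        + exp (-(N / 8)) * ∏ j, (1 + v j ^ 2 / (4 * n))⁻¹ := by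
  have hsum : 0 ≤ ∑ j, v j ^ 2 := Finset.sum_nonneg fun j _ => sq_nonneg _
  have hcauchy : (∑ j, v j ^ 2) ^ 2 ≤ m * ∑ j, v j ^ 4 := by
    have h := sq_sum_le_card_mul_sum_sq (s := Finset.univ) (f := fun j : Fin m => v j ^ 2)
    simp_rw [← pow_mul] at h
    simpa using h
  rcases le_total (∑ j, v j ^ 2) N with h | h
  · have hsq : (∑ i, a i ^ 2) * (∑ j, v j ^ 2) ^ 2 ≤ 1 := hN_sq.trans' (by gcongr)
    refine (prod_inv_sqrt_one_add_le_of_sq_le ha ha_sum hsum hsq).trans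
      (le_add_of_le_of_nonneg ?_ (by positivity))
    rw [mul_assoc _ (m : ℝ)]
    gcongr
  · refine (prod_inv_sqrt_one_add_le_of_le hn ha ha_sum haN hnN h).trans
      (le_add_of_nonneg_of_le (by positivity) ?_)
    gcongr
    exact inv_one_add_sum_sq_div_pow_le_prod hmn (by positivity) v

end ProductBound

section IntegralBound

variable {m n : ℕ}

lemma lintegral_inv_one_add_sq_div {c : ℝ} (hc : 0 < c) :
    ∫⁻ x : ℝ, ENNReal.ofReal ((1 + x ^ 2 / c)⁻¹) = ENNReal.ofReal (√c * π) := by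
  have hsqrt : 0 < √c := sqrt_pos.mpr hc
  have hscale (x : ℝ) : (1 + x ^ 2 / c)⁻¹ = (1 + (x / √c) ^ 2)⁻¹ := by rw [div_pow, sq_sqrt hc.le]
  simp_rw [hscale]
  rw [← ofReal_integral_eq_lintegral_ofReal (integrable_inv_one_add_sq.comp_div hsqrt.ne')
    (ae_of_all _ fun x => by positivity),
    Measure.integral_comp_div (fun x : ℝ => (1 + x ^ 2)⁻¹), integral_univ_inv_one_add_sq,
    abs_of_pos hsqrt, smul_eq_mul]

lemma lintegral_pow_four_gaussianReal_le :
    ∫⁻ x, ENNReal.ofReal (x ^ 4) ∂(gaussianReal 0 1) ≤ 64 := by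
  have hpt (x : ℝ) : gaussianPDFReal 0 1 x * x ^ 4
      ≤ 32 * ((√(2 * π))⁻¹ * exp (-(1 / 2) * (1 / 2 * x ^ 2))) := by
    have hpow : x ^ 4 ≤ 32 * exp (x ^ 2 / 4) := by
      nlinarith [quadratic_le_exp_of_nonneg (x := x ^ 2 / 4) (by positivity), sq_nonneg x]
    calc
      _ ≤ gaussianPDFReal 0 1 x * (32 * exp (x ^ 2 / 4)) := by
        gcongr
        exact gaussianPDFReal_nonneg _ _ _
      _ = _ := by
        have hexp : exp (-(1 / 2) * (1 / 2 * x ^ 2)) = exp (-x ^ 2 / 2) * exp (x ^ 2 / 4) := by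
          rw [← exp_add]; ring_nf
        rw [gaussianPDFReal, hexp]
        simp only [NNReal.coe_one, mul_one, sub_zero]
        ring
  rw [gaussianReal_of_var_ne_zero _ one_ne_zero,
    lintegral_withDensity_eq_lintegral_mul _ (by fun_prop) (by fun_prop)]
  calc
    _ ≤ ∫⁻ x : ℝ, 32 * ENNReal.ofReal ((√(2 * π))⁻¹ * exp (-(1 / 2) * (1 / 2 * x ^ 2))) := by
      refine lintegral_mono fun x => ?_
      rw [Pi.mul_apply, gaussianPDF, ← ENNReal.ofReal_mul (gaussianPDFReal_nonneg _ _ _)]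
      refine (ENNReal.ofReal_le_ofReal (hpt x)).trans_eq ?_
      rw [ENNReal.ofReal_mul (by norm_num), ENNReal.ofReal_ofNat]
    _ = 32 * ENNReal.ofReal (√(1 / 2))⁻¹ := by
      rw [lintegral_const_mul' _ _ (by simp), lintegral_exp_neg_mul_sq (by norm_num),
        ENNReal.ofReal_inv_of_pos (by positivity)]
    _ ≤ 32 * 2 := by
      gcongr
      rw [← sqrt_inv, one_div, inv_inv]
      exact ENNReal.ofReal_le_of_le_toReal
        ((sqrt_le_left (by norm_num)).mpr (by norm_num))
    _ = 64 := by norm_num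

lemma lintegral_sum_pow_four_stdGaussPi_le (m : ℕ) :
    ∫⁻ v, ENNReal.ofReal (∑ j, v j ^ 4) ∂(stdGaussPi m) ≤ m * 64 := by
  have hsum (v : Fin m → ℝ) : ENNReal.ofReal (∑ j, v j ^ 4) = ∑ j, ENNReal.ofReal (v j ^ 4) :=
    ENNReal.ofReal_sum_of_nonneg fun j _ => by positivity
  have hcoord (j : Fin m) : ∫⁻ v, ENNReal.ofReal (v j ^ 4) ∂(stdGaussPi m) ≤ 64 :=
    ((measurePreserving_eval (fun _ : Fin m => gaussianReal 0 1) j).lintegral_comp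
      (f := fun x => ENNReal.ofReal (x ^ 4)) (by fun_prop)).trans_le
      lintegral_pow_four_gaussianReal_le
  simp_rw [hsum]
  rw [lintegral_finsetSum _ fun j _ => by fun_prop]
  simpa using Finset.sum_le_sum fun j (_ : j ∈ Finset.univ) => hcoord j

lemma lintegral_gaussian_mul_one_add_sum_pow_four_le (m : ℕ) {c : ℝ} (hc : 0 ≤ c) :
    ∫⁻ v : Fin m → ℝ, ENNReal.ofReal ((√(2 * π))⁻¹ ^ m * exp (-(1 / 2) * ∑ j, v j ^ 2)
        * (1 + c * ∑ j, v j ^ 4)) ≤ ENNReal.ofReal (1 + 64 * c * m) := by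
  have hsum (v : Fin m → ℝ) : 0 ≤ ∑ j, v j ^ 4 := Finset.sum_nonneg fun j _ => by positivity
  have hdens : ∫⁻ v : Fin m → ℝ, ENNReal.ofReal ((√(2 * π))⁻¹ ^ m
        * exp (-(1 / 2) * ∑ j, v j ^ 2) * (1 + c * ∑ j, v j ^ 4))
      = ∫⁻ v, (1 + ENNReal.ofReal c * ENNReal.ofReal (∑ j, v j ^ 4)) ∂(stdGaussPi m) := by
    rw [stdGaussPi_eq_withDensity,
      lintegral_withDensity_eq_lintegral_mul _ (by fun_prop) (by fun_prop)]
    refine lintegral_congr fun v => ?_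
    rw [Pi.mul_apply, ENNReal.ofReal_mul (by positivity),
      ENNReal.ofReal_add zero_le_one (mul_nonneg hc (hsum v)), ENNReal.ofReal_one,
      ENNReal.ofReal_mul hc]
  calc
    _ = 1 + ENNReal.ofReal c * ∫⁻ v, ENNReal.ofReal (∑ j, v j ^ 4) ∂(stdGaussPi m) := by
      rw [hdens, lintegral_add_left (by fun_prop), lintegral_one, measure_univ,
        lintegral_const_mul' _ _ ENNReal.ofReal_ne_top]
    _ ≤ 1 + ENNReal.ofReal c * (m * 64) := by
      gcongr
      exact lintegral_sum_pow_four_stdGaussPi_le m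
    _ = _ := by
      rw [ENNReal.ofReal_add zero_le_one (by positivity), ENNReal.ofReal_one,
        ENNReal.ofReal_mul (by positivity), ENNReal.ofReal_mul (by norm_num),
        ENNReal.ofReal_natCast, ENNReal.ofReal_ofNat]
      ring

lemma lintegral_prod_cauchy_le (hn : n ≠ 0) (hmn : m ≤ n) :
    ∫⁻ v : Fin m → ℝ, ENNReal.ofReal ((√(2 * π))⁻¹ ^ m * ∏ j, (1 + v j ^ 2 / (4 * n))⁻¹)
      ≤ ENNReal.ofReal (exp (3 * (n * √n))) := by
  have hone : √(2 * π) * exp (3 * √n) ≥ √(4 * n) * π := by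
    have hsqrt_pi : 2.2 ≤ √(2 * π) := le_sqrt_of_sq_le (by nlinarith [pi_gt_three])
    have hsqrt_n : √(4 * n) = 2 * √(n : ℝ) := by
      rw [sqrt_mul (by norm_num), show (4 : ℝ) = 2 ^ 2 by norm_num, sqrt_sq (by norm_num)]
    have hexp := add_one_le_exp (3 * √(n : ℝ))
    rw [hsqrt_n]
    calc
      2 * √n * π ≤ 2.2 * (3 * √n + 1) := by nlinarith [pi_lt_d2, sqrt_nonneg (n : ℝ)]
      _ ≤ _ := by gcongr
  have hfactor (v : Fin m → ℝ) :
      ENNReal.ofReal ((√(2 * π))⁻¹ ^ m * ∏ j, (1 + v j ^ 2 / (4 * n))⁻¹)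
        = ENNReal.ofReal ((√(2 * π))⁻¹ ^ m) * ∏ j, ENNReal.ofReal ((1 + v j ^ 2 / (4 * n))⁻¹) := by
    rw [ENNReal.ofReal_mul (by positivity), ENNReal.ofReal_prod_of_nonneg fun j _ => by positivity]
  calc
    _ = ENNReal.ofReal (((√(2 * π))⁻¹ * (√(4 * n) * π)) ^ m) := by
      simp_rw [hfactor]
      rw [lintegral_const_mul' _ _ ENNReal.ofReal_ne_top, volume_pi,
        lintegral_pi_fin_prod_eq_prod (fun _ => volume)
          (f := fun _ x => ENNReal.ofReal ((1 + x ^ 2 / (4 * n))⁻¹)) fun _ => by fun_prop]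
      simp_rw [lintegral_inv_one_add_sq_div (show (0 : ℝ) < 4 * n by positivity)]
      rw [Finset.prod_const, Finset.card_univ, Fintype.card_fin, mul_pow,
        ENNReal.ofReal_mul (p := (√(2 * π))⁻¹ ^ m) (by positivity),
        ENNReal.ofReal_pow (p := √(4 * n) * π) (by positivity)]
    _ ≤ ENNReal.ofReal (exp (3 * √n) ^ m) := by
      gcongr
      rwa [inv_mul_le_iff₀ (by positivity)]
    _ ≤ ENNReal.ofReal (exp (3 * √n) ^ n) := by
      gcongr
      exact one_le_exp (by positivity)
    _ = _ := by
      rw [← exp_nat_mul]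
      ring_nf

lemma lintegral_prod_inv_sqrt_one_add_le {ι : Type*} [Fintype ι] {a : ι → ℝ} {N : ℝ} (hn : n ≠ 0)
    (hmn : m ≤ n) (ha : ∀ i, 0 ≤ a i) (ha_sum : ∑ i, a i = 1)
    (hN_sq : (∑ i, a i ^ 2) * N ^ 2 ≤ 1) (haN : ∀ i, a i * N ≤ 1) (hnN : 32 * (n * √n) ≤ N) :
    ∫⁻ v : Fin m → ℝ, ENNReal.ofReal ((√(2 * π))⁻¹ ^ m * ∏ i, (√(1 + a i * ∑ j, v j ^ 2))⁻¹)
      ≤ ENNReal.ofReal (1 + 32 * (∑ i, a i ^ 2) * m ^ 2 + exp (-n)) := by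
  have hn' : (1 : ℝ) ≤ n := Nat.one_le_cast.mpr (Nat.one_le_iff_ne_zero.mpr hn)
  have hsqrt : 1 ≤ √(n : ℝ) := one_le_sqrt.mpr hn'
  have hpt (v : Fin m → ℝ) :
      ENNReal.ofReal ((√(2 * π))⁻¹ ^ m * ∏ i, (√(1 + a i * ∑ j, v j ^ 2))⁻¹)
        ≤ ENNReal.ofReal ((√(2 * π))⁻¹ ^ m * exp (-(1 / 2) * ∑ j, v j ^ 2)
            * (1 + (∑ i, a i ^ 2) / 2 * m * ∑ j, v j ^ 4))
          + ENNReal.ofReal (exp (-(N / 8)))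
            * ENNReal.ofReal ((√(2 * π))⁻¹ ^ m * ∏ j, (1 + v j ^ 2 / (4 * n))⁻¹) := by
    rw [← ENNReal.ofReal_mul (by positivity),
      ← ENNReal.ofReal_add (by positivity) (by positivity)]
    refine ENNReal.ofReal_le_ofReal ((mul_le_mul_of_nonneg_left
      (prod_inv_sqrt_one_add_sum_sq_le hn hmn ha ha_sum hN_sq haN (by nlinarith) v)
      (by positivity)).trans_eq (by ring))
  calc
    _ ≤ ENNReal.ofReal (1 + 64 * ((∑ i, a i ^ 2) / 2 * m) * m)
        + ENNReal.ofReal (exp (-(N / 8))) * ENNReal.ofReal (exp (3 * (n * √n))) := by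
      refine (lintegral_mono hpt).trans ?_
      rw [lintegral_add_left (by fun_prop), lintegral_const_mul' _ _ ENNReal.ofReal_ne_top]
      gcongr
      · exact lintegral_gaussian_mul_one_add_sum_pow_four_le m (by positivity)
      · exact lintegral_prod_cauchy_le hn hmn
    _ ≤ ENNReal.ofReal (1 + 32 * (∑ i, a i ^ 2) * m ^ 2) + ENNReal.ofReal (exp (-n)) := by
      have hexponent : -(N / 8) + 3 * (n * √n) ≤ -n := by nlinarith
      rw [← ENNReal.ofReal_mul (by positivity), ← exp_add]
      exact add_le_add (ENNReal.ofReal_le_ofReal (by ring_nf; rfl))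
        (ENNReal.ofReal_le_ofReal (exp_le_exp.mpr hexponent))
    _ = _ := (ENNReal.ofReal_add (by positivity) (by positivity)).symm

end IntegralBound

section GaussianPiIntegral

open Matrix

lemma lintegral_exp_neg_sum_mul_sq_pi_gaussianReal {d : ℕ} {c : Fin d → ℝ} (hc : ∀ i, 0 ≤ c i)
    (w : Fin d → ℝ≥0) :
    ∫⁻ u, ENNReal.ofReal (exp (-(1 / 2) * ∑ i, c i * u i ^ 2))
        ∂(Measure.pi fun i => gaussianReal 0 (w i))
      = ENNReal.ofReal (∏ i, (√(1 + c i * w i))⁻¹) := by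
  simp_rw [Finset.mul_sum, exp_sum,
    ENNReal.ofReal_prod_of_nonneg fun (i : Fin d) (_ : i ∈ Finset.univ) => (exp_pos _).le]
  rw [lintegral_pi_fin_prod_eq_prod (fun i => gaussianReal 0 (w i))
      (f := fun i x => ENNReal.ofReal (exp (-(1 / 2) * (c i * x ^ 2)))) fun i => by fun_prop,
    ENNReal.ofReal_prod_of_nonneg fun _ _ => by positivity]
  simp_rw [lintegral_exp_neg_mul_sq_gaussianReal _ (hc _)]

lemma map_vecMul_pi_pi_gaussianReal {ι κ : Type*} [Fintype ι] [Fintype κ]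
    (w : ι → ℝ≥0) (v : κ → ℝ) :
    (Measure.pi fun _ : κ => Measure.pi fun i => gaussianReal 0 (w i)).map
        (fun X : κ → ι → ℝ => v ᵥ* of X)
      = Measure.pi fun i => gaussianReal 0 ((∑ j, ‖v j‖₊ ^ 2) * w i) := by
  let A : (κ → ι → ℝ) →L[ℝ] (ι → ℝ) :=
    ∑ j, v j • ContinuousLinearMap.proj (R := ℝ) (φ := fun _ : κ => ι → ℝ) j
  have hA : (fun X : κ → ι → ℝ => v ᵥ* of X) = A := by
    ext X i
    simp [A, vecMul, dotProduct]
  have hA_single (j : κ) (i : ι) : A (Pi.single j (Pi.single i 1)) = v j • Pi.single i 1 := by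
    simp [A, Pi.single_apply]
  rw [hA]
  have := Measure.isProbabilityMeasure_map (f := A)
    (μ := Measure.pi fun _ : κ => Measure.pi fun i => gaussianReal 0 (w i)) (by fun_prop)
  refine Measure.ext_of_charFunDual (funext fun L => ?_)
  rw [charFunDual_map, charFunDual_pi, charFunDual_pi_gaussianReal]
  simp_rw [charFunDual_pi_gaussianReal, ← Complex.exp_sum, ← Complex.ofReal_sum, ← Finset.mul_sum]
  rw [Finset.sum_comm]
  simp [hA_single, mul_pow, Finset.sum_mul, mul_left_comm, mul_assoc]

end GaussianPiIntegral

section RowCovariance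

open Matrix InformationTheory

variable {m d : ℕ} {α : Fin d → ℝ}

instance (d : ℕ) (α : Fin d → ℝ) : IsProbabilityMeasure (gaussPi d α) := by
  unfold gaussPi; infer_instance

instance (n d : ℕ) (α : Fin d → ℝ) : IsProbabilityMeasure (sampleMeasure n d α) := by
  unfold sampleMeasure; infer_instance

lemma nrm_pow {q : ℕ} (hq : q ≠ 0) (hα : ∀ i, 0 ≤ α i) : nrm q α ^ q = ∑ i, α i ^ q := by
  rw [nrm, one_div, rpow_inv_natCast_pow (Finset.sum_nonneg fun i _ => pow_nonneg (hα i) q) hq]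

lemma sum_sq_div_nrm_two_sq (hα : ∀ i, 0 ≤ α i) (hnrm : nrm 2 α ≠ 0) :
    ∑ i, (α i / nrm 2 α) ^ 2 = 1 := by
  simp_rw [div_pow, ← Finset.sum_div]
  rw [← nrm_pow two_ne_zero hα, div_self (pow_ne_zero 2 hnrm)]

/-- The data matrix `X / ‖α‖₂`, which maps a further sample `x` to the new off-diagonal entries
`⟨X_j, x⟩ / ‖α‖₂` of the Wishart matrix. -/
def normalizedData (α : Fin d → ℝ) (X : Fin m → Fin d → ℝ) : Matrix (Fin m) (Fin d) ℝ :=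
  (nrm 2 α)⁻¹ • of X

/-- The covariance matrix of the new off-diagonal entries `⟨X_j, x⟩ / ‖α‖₂`, `x ∼ N(0, D_α)`,
conditionally on the samples `X`. -/
def rowCov (α : Fin d → ℝ) (X : Fin m → Fin d → ℝ) : Matrix (Fin m) (Fin m) ℝ :=
  normalizedData α X * diagonal α * (normalizedData α X)ᵀ

lemma continuous_normalizedData (α : Fin d → ℝ) :
    Continuous fun X : Fin m → Fin d → ℝ => normalizedData α X :=
  continuous_id.const_smul (nrm 2 α)⁻¹

lemma continuous_rowCov (α : Fin d → ℝ) : Continuous fun X : Fin m → Fin d → ℝ => rowCov α X :=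
  ((continuous_normalizedData α).matrix_mul continuous_const).matrix_mul
    (continuous_normalizedData α).matrix_transpose

lemma dotProduct_rowCov_mulVec (X : Fin m → Fin d → ℝ) (v : Fin m → ℝ) :
    v ⬝ᵥ (rowCov α X *ᵥ v) = ∑ i, α i / nrm 2 α ^ 2 * (v ᵥ* of X) i ^ 2 := by
  rw [rowCov, ← sum_mul_vecMul_sq]
  refine Finset.sum_congr rfl fun i _ => ?_
  rw [normalizedData, vecMul_smul, Pi.smul_apply, smul_eq_mul]
  ring

lemma trace_rowCov (X : Fin m → Fin d → ℝ) :
    (rowCov α X).trace = ∑ j, ∑ i, α i / nrm 2 α ^ 2 * X j i ^ 2 := by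
  refine Finset.sum_congr rfl fun j _ => ?_
  rw [diag_apply, rowCov, mul_apply]
  refine Finset.sum_congr rfl fun i _ => ?_
  rw [mul_diagonal, transpose_apply, normalizedData, Matrix.smul_apply, of_apply, smul_eq_mul]
  ring

lemma lintegral_gaussIntegral_rowCov (hα : ∀ i, 0 ≤ α i) :
    ∫⁻ X, gaussIntegral (rowCov α X) ∂(sampleMeasure m d α)
      = ∫⁻ v : Fin m → ℝ, ENNReal.ofReal ((√(2 * π))⁻¹ ^ m *
          ∏ i, (√(1 + (α i / nrm 2 α) ^ 2 * ∑ j, v j ^ 2))⁻¹) := by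
  have hquad : Continuous fun p : (Fin m → Fin d → ℝ) × (Fin m → ℝ) =>
      p.2 ⬝ᵥ (rowCov α p.1 *ᵥ p.2) :=
    continuous_snd.dotProduct
      (((continuous_rowCov α).comp continuous_fst).matrix_mulVec continuous_snd)
  unfold gaussIntegral
  rw [lintegral_lintegral_swap
    (((hquad.measurable.const_mul _).exp.const_mul _).ennreal_ofReal.aemeasurable)]
  refine lintegral_congr fun v => ?_
  have hlaw := map_vecMul_pi_pi_gaussianReal (fun i => (α i).toNNReal) v
  have hvec : Continuous fun X : Fin m → Fin d → ℝ => v ᵥ* of X :=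
    continuous_const.matrix_vecMul continuous_id
  have hpush := lintegral_map (μ := sampleMeasure m d α)
    (f := fun u : Fin d → ℝ =>
      ENNReal.ofReal (exp (-(1 / 2) * ∑ i, α i / nrm 2 α ^ 2 * u i ^ 2)))
    (g := fun X : Fin m → Fin d → ℝ => v ᵥ* of X) (by fun_prop) hvec.measurable
  have hpos : (0 : ℝ) ≤ (√(2 * π))⁻¹ ^ m := by positivity
  simp_rw [dotProduct_rowCov_mulVec, ENNReal.ofReal_mul hpos]
  rw [lintegral_const_mul' _ _ ENNReal.ofReal_ne_top, ← hpush]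
  unfold sampleMeasure gaussPi
  rw [hlaw, lintegral_exp_neg_sum_mul_sq_pi_gaussianReal
    fun i => div_nonneg (hα i) (sq_nonneg _)]
  congr 3 with i
  simp only [NNReal.coe_mul, NNReal.coe_sum, NNReal.coe_pow, coe_nnnorm, norm_eq_abs, sq_abs,
    coe_toNNReal _ (hα i)]
  ring_nf

lemma lintegral_trace_rowCov (hα : ∀ i, 0 ≤ α i) (hnrm : nrm 2 α ≠ 0) :
    ∫⁻ X, ENNReal.ofReal ((rowCov α X).trace) ∂(sampleMeasure m d α) = m := by
  have hentry (j : Fin m) (i : Fin d) :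
      ∫⁻ X, ENNReal.ofReal (X j i ^ 2) ∂(sampleMeasure m d α) = ENNReal.ofReal (α i) := by
    have hmp : MeasurePreserving (fun X : Fin m → Fin d → ℝ => X j i) (sampleMeasure m d α)
        (gaussianReal 0 (α i).toNNReal) :=
      (measurePreserving_eval (fun i => gaussianReal 0 (α i).toNNReal) i).comp
        (measurePreserving_eval (fun _ => gaussPi d α) j)
    rw [hmp.lintegral_comp (f := fun x => ENNReal.ofReal (x ^ 2)) (by fun_prop),
      lintegral_sq_gaussianReal]
    rfl
  have hcoef (i : Fin d) : 0 ≤ α i / nrm 2 α ^ 2 := div_nonneg (hα i) (sq_nonneg _)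
  have hrow (j : Fin m) : ∫⁻ X, ∑ i, ENNReal.ofReal (α i / nrm 2 α ^ 2)
      * ENNReal.ofReal (X j i ^ 2) ∂(sampleMeasure m d α) = 1 := by
    rw [lintegral_finsetSum _ fun i _ => by fun_prop]
    simp_rw [lintegral_const_mul' _ _ ENNReal.ofReal_ne_top, hentry, ← ENNReal.ofReal_mul (hcoef _)]
    rw [← ENNReal.ofReal_sum_of_nonneg fun i _ => mul_nonneg (hcoef i) (hα i),
      ← ENNReal.ofReal_one, ← sum_sq_div_nrm_two_sq hα hnrm]
    congr 2 with i
    ring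
  have htrace (X : Fin m → Fin d → ℝ) : ENNReal.ofReal (rowCov α X).trace
      = ∑ j, ∑ i, ENNReal.ofReal (α i / nrm 2 α ^ 2) * ENNReal.ofReal (X j i ^ 2) := by
    have hterm (j : Fin m) (i : Fin d) : 0 ≤ α i / nrm 2 α ^ 2 * X j i ^ 2 :=
      mul_nonneg (hcoef i) (sq_nonneg _)
    rw [trace_rowCov,
      ENNReal.ofReal_sum_of_nonneg fun j _ => Finset.sum_nonneg fun i _ => hterm j i]
    simp_rw [ENNReal.ofReal_sum_of_nonneg fun i (_ : i ∈ Finset.univ) => hterm _ i,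
      ENNReal.ofReal_mul (hcoef _)]
  simp_rw [htrace]
  rw [lintegral_finsetSum _ fun j _ => by fun_prop]
  simp [hrow]

end RowCovariance

section NewRow

open Matrix InformationTheory

variable {m d : ℕ} {α : Fin d → ℝ}

lemma compProd_id_prod_const_map {𝓧 𝓨 𝓩 : Type*} [MeasurableSpace 𝓧] [MeasurableSpace 𝓨]
    [MeasurableSpace 𝓩] (μ : Measure 𝓧) (γ : Measure 𝓨) [SFinite μ] [SFinite γ] {g : 𝓧 × 𝓨 → 𝓩}
    (hg : Measurable g) :
    μ ⊗ₘ (Kernel.id ×ₖ Kernel.const 𝓧 γ).map g = (μ.prod γ).map fun p => (p.1, g p) := by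
  ext s hs
  rw [Measure.compProd_apply hs, Measure.map_apply (by fun_prop) hs,
    Measure.prod_apply (measurable_fst.prodMk hg hs)]
  refine lintegral_congr fun x => ?_
  have hs' : MeasurableSet (Prod.mk x ⁻¹' s) := measurable_prodMk_left hs
  rw [Kernel.map_apply' _ hg _ hs', Kernel.id_prod_apply' _ _ (hg hs')]
  rfl

lemma measurable_normalizedData_mulVec (α : Fin d → ℝ) :
    Measurable fun p : (Fin m → Fin d → ℝ) × (Fin d → ℝ) => normalizedData α p.1 *ᵥ p.2 :=
  (((continuous_normalizedData α).comp continuous_fst).matrix_mulVec continuous_snd).measurable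

/-- The conditional law of the new off-diagonal entries `⟨X_j, x⟩ / ‖α‖₂`, `x ∼ N(0, D_α)`, given
the samples `X`. -/
def newRowKernel (m : ℕ) (α : Fin d → ℝ) : Kernel (Fin m → Fin d → ℝ) (Fin m → ℝ) :=
  (Kernel.id ×ₖ Kernel.const _ (gaussPi d α)).map fun p => normalizedData α p.1 *ᵥ p.2

instance (m : ℕ) (α : Fin d → ℝ) : IsMarkovKernel (newRowKernel m α) :=
  Kernel.IsMarkovKernel.map _ (measurable_normalizedData_mulVec α)

lemma newRowKernel_apply (X : Fin m → Fin d → ℝ) :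
    newRowKernel m α X = (gaussPi d α).map (normalizedData α X *ᵥ ·) := by
  have hg := measurable_normalizedData_mulVec (m := m) α
  rw [newRowKernel, Kernel.map_apply _ hg, Kernel.prod_apply, Kernel.id_apply, Kernel.const_apply,
    Measure.dirac_prod, Measure.map_map hg (by fun_prop)]
  rfl

lemma lintegral_klDiv_newRowKernel_le (hα : ∀ i, 0 ≤ α i) (hnrm : nrm 2 α ≠ 0) {b : ℝ≥0∞}
    (hb : ∫⁻ X, gaussIntegral (rowCov α X) ∂(sampleMeasure m d α) ≤ 1 + b) :
    ∫⁻ X, klDiv (newRowKernel m α X) (stdGaussPi m) ∂(sampleMeasure m d α) ≤ b := by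
  have hpt (X : Fin m → Fin d → ℝ) :
      klDiv (newRowKernel m α X) (stdGaussPi m) + ENNReal.ofReal (m / 2 + 1)
        ≤ ENNReal.ofReal ((rowCov α X).trace / 2) + gaussIntegral (rowCov α X) := by
    rw [newRowKernel_apply]
    exact klDiv_map_mulVec_add_le (normalizedData α X) (by simp [rowCov, hα])
  have htrace_meas : Measurable fun X : Fin m → Fin d → ℝ => (rowCov α X).trace :=
    (continuous_rowCov α).matrix_trace.measurable
  have htrace : ∫⁻ X : Fin m → Fin d → ℝ, ENNReal.ofReal ((rowCov α X).trace / 2)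
      ∂(sampleMeasure m d α) = ENNReal.ofReal (m / 2) := by
    simp_rw [div_eq_mul_inv _ (2 : ℝ), ENNReal.ofReal_mul' (show (0 : ℝ) ≤ 2⁻¹ by norm_num)]
    rw [lintegral_mul_const' _ _ ENNReal.ofReal_ne_top, lintegral_trace_rowCov hα hnrm,
      ENNReal.ofReal_natCast]
  have hsum := lintegral_mono hpt (μ := sampleMeasure m d α)
  rw [lintegral_add_right _ measurable_const, lintegral_const, measure_univ, mul_one,
    lintegral_add_left (by fun_prop), htrace] at hsum
  refine (ENNReal.add_le_add_iff_right (ENNReal.ofReal_ne_top (r := m / 2 + 1))).mp ?_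
  calc _ ≤ ENNReal.ofReal (m / 2) + (1 + b) := hsum.trans (by gcongr)
    _ = b + ENNReal.ofReal (m / 2 + 1) := by
      rw [ENNReal.ofReal_add (by positivity) zero_le_one, ENNReal.ofReal_one]
      ring

end NewRow

section Bordering

open Matrix InformationTheory

variable {m d : ℕ} {α : Fin d → ℝ}

/-- The square matrix `M` with a last row and a last column `w` added, and `0` in the corner. -/
def bordered (M : Fin m → Fin m → ℝ) (w : Fin m → ℝ) : Fin (m + 1) → Fin (m + 1) → ℝ :=
  Fin.snoc (α := fun _ => Fin (m + 1) → ℝ) (fun i => Fin.snoc (α := fun _ => ℝ) (M i) (w i))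
    (Fin.snoc (α := fun _ => ℝ) w 0)

@[simp] lemma bordered_castSucc_castSucc (M : Fin m → Fin m → ℝ) (w : Fin m → ℝ) (i j : Fin m) :
    bordered M w i.castSucc j.castSucc = M i j := by
  simp [bordered]

@[simp] lemma bordered_castSucc_last (M : Fin m → Fin m → ℝ) (w : Fin m → ℝ) (i : Fin m) :
    bordered M w i.castSucc (Fin.last m) = w i := by
  simp [bordered]

@[simp] lemma bordered_last_castSucc (M : Fin m → Fin m → ℝ) (w : Fin m → ℝ) (j : Fin m) :
    bordered M w (Fin.last m) j.castSucc = w j := by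
  simp [bordered]

@[simp] lemma bordered_last_last (M : Fin m → Fin m → ℝ) (w : Fin m → ℝ) :
    bordered M w (Fin.last m) (Fin.last m) = 0 := by
  simp [bordered]

lemma eq_bordered_of_blocks {M : Fin m → Fin m → ℝ} {w : Fin m → ℝ}
    {A : Fin (m + 1) → Fin (m + 1) → ℝ} (hM : ∀ i j, A i.castSucc j.castSucc = M i j)
    (hcol : ∀ i, A i.castSucc (Fin.last m) = w i) (hrow : ∀ j, A (Fin.last m) j.castSucc = w j)
    (hcorner : A (Fin.last m) (Fin.last m) = 0) : A = bordered M w := by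
  ext i j
  induction i using Fin.lastCases <;> induction j using Fin.lastCases <;> simp [*]

lemma measurable_bordered :
    Measurable fun p : (Fin m → Fin m → ℝ) × (Fin m → ℝ) => bordered p.1 p.2 := by
  refine measurable_pi_lambda _ fun i => measurable_pi_lambda _ fun j => ?_
  induction i using Fin.lastCases <;> induction j using Fin.lastCases <;>
    simp only [bordered_castSucc_castSucc, bordered_castSucc_last, bordered_last_castSucc,
      bordered_last_last] <;> fun_prop

lemma pi_map_comp_of_injective {ι κ E : Type*} [Fintype ι] [Fintype κ] [MeasurableSpace E]
    {e : κ → ι} (he : Function.Injective e) (μ : Measure E) [IsProbabilityMeasure μ] :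
    (Measure.pi fun _ : ι => μ).map (· ∘ e) = Measure.pi fun _ : κ => μ := by
  have hindep : iIndepFun (fun (i : ι) (x : ι → E) => x i) (Measure.pi fun _ : ι => μ) :=
    iIndepFun_pi (μ := fun _ : ι => μ) (X := fun _ x => x) fun _ => aemeasurable_id
  have hpi := hindep.precomp he
  rw [iIndepFun_iff_map_fun_eq_pi_map fun _ => (measurable_pi_apply _).aemeasurable] at hpi
  refine hpi.trans (congrArg Measure.pi (funext fun k => ?_))
  exact (measurePreserving_eval (fun _ : ι => μ) (e k)).map_eq

/-- The positions in the top left block and in the last column of a symmetric matrix, as positions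
in the whole matrix. -/
def borderIndex (m : ℕ) : Sym2 (Fin m) ⊕ Fin m → Sym2 (Fin (m + 1)) :=
  Sum.elim (Sym2.map Fin.castSucc) fun j => s(j.castSucc, Fin.last m)

lemma borderIndex_injective (m : ℕ) : Function.Injective (borderIndex m) := by
  refine (Sym2.map.injective (Fin.castSucc_injective m)).sumElim ?_ ?_
  · intro i j h
    simpa using h
  · intro x j h
    have hmem : Fin.last m ∈ Sym2.map Fin.castSucc x := h ▸ Sym2.mem_mk_right _ _
    obtain ⟨i, -, hi⟩ := Sym2.mem_map.mp hmem
    exact (Fin.castSucc_lt_last i).ne hi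

/-- The symmetric matrix with zero diagonal and the given off-diagonal entries. -/
def offDiagMatrix (n : ℕ) (x : Sym2 (Fin n) → ℝ) (i j : Fin n) : ℝ :=
  if i = j then 0 else x s(i, j)

lemma measurable_offDiagMatrix (n : ℕ) : Measurable (offDiagMatrix n) := by
  refine measurable_pi_lambda _ fun i => measurable_pi_lambda _ fun j => ?_
  unfold offDiagMatrix
  split_ifs <;> fun_prop

instance (n : ℕ) : IsProbabilityMeasure (goeOffDiag n) :=
  Measure.isProbabilityMeasure_map (measurable_offDiagMatrix n).aemeasurable

lemma offDiagMatrix_succ (x : Sym2 (Fin (m + 1)) → ℝ) :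
    offDiagMatrix (m + 1) x = bordered (offDiagMatrix m fun s => x (borderIndex m (.inl s)))
      fun j => x (borderIndex m (.inr j)) := by
  apply eq_bordered_of_blocks <;> intros <;>
    simp [offDiagMatrix, borderIndex, Fin.castSucc_ne_last, (Fin.castSucc_ne_last _).symm,
      Sym2.eq_swap]

lemma goeOffDiag_succ (m : ℕ) :
    goeOffDiag (m + 1) = ((goeOffDiag m).prod (stdGaussPi m)).map fun p => bordered p.1 p.2 := by
  have hsplit := (measurePreserving_sumPiEquivProdPi (ι := Sym2 (Fin m)) (ι' := Fin m)
    (X := fun _ => ℝ) fun _ => gaussianReal 0 1).map_eq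
  have hoff := measurable_offDiagMatrix m
  rw [show goeOffDiag m = (Measure.pi fun _ => gaussianReal 0 1).map (offDiagMatrix m) from rfl,
    ← Measure.map_id (μ := stdGaussPi m), Measure.map_prod_map _ _ hoff measurable_id,
    ← hsplit, ← pi_map_comp_of_injective (borderIndex_injective m) (gaussianReal 0 1),
    Measure.map_map (hoff.prodMap measurable_id) (by fun_prop),
    Measure.map_map measurable_bordered (by fun_prop),
    Measure.map_map (measurable_bordered.comp ((hoff.prodMap measurable_id).comp (by fun_prop)))
      (by fun_prop)]
  exact congrArg (Measure.map · _) (funext offDiagMatrix_succ)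

end Bordering

section WishartRecursion

open Matrix InformationTheory

variable {m d : ℕ} {α : Fin d → ℝ}

/-- The map taking the samples `X` to their normalized off-diagonal Wishart matrix. -/
def wishartMatrix (α : Fin d → ℝ) (n : ℕ) (X : Fin n → Fin d → ℝ) (i j : Fin n) : ℝ :=
  if i = j then 0 else dotp (X i) (X j) / nrm 2 α

lemma measurable_wishartMatrix (α : Fin d → ℝ) (n : ℕ) : Measurable (wishartMatrix α n) := by
  refine measurable_pi_lambda _ fun i => measurable_pi_lambda _ fun j => ?_
  unfold wishartMatrix dotp
  split_ifs <;> fun_prop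

instance (n d : ℕ) (α : Fin d → ℝ) : IsProbabilityMeasure (wishartOffDiag n d α) :=
  Measure.isProbabilityMeasure_map (measurable_wishartMatrix α n).aemeasurable

lemma normalizedData_mulVec_apply (X : Fin m → Fin d → ℝ) (x : Fin d → ℝ) (j : Fin m) :
    (normalizedData α X *ᵥ x) j = dotp (X j) x / nrm 2 α := by
  rw [normalizedData, smul_mulVec, Pi.smul_apply, smul_eq_mul, inv_mul_eq_div]
  rfl

lemma wishartMatrix_snoc (X : Fin m → Fin d → ℝ) (x : Fin d → ℝ) :
    wishartMatrix α (m + 1) (Fin.snoc (α := fun _ => Fin d → ℝ) X x)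
      = bordered (wishartMatrix α m X) (normalizedData α X *ᵥ x) := by
  have hcomm (j : Fin m) : dotp x (X j) = dotp (X j) x := dotProduct_comm x (X j)
  apply eq_bordered_of_blocks <;> intros <;>
    simp [wishartMatrix, normalizedData_mulVec_apply, hcomm, Fin.castSucc_ne_last,
      (Fin.castSucc_ne_last _).symm]

lemma measurePreserving_snoc {E : Type*} [MeasurableSpace E] (m : ℕ) (μ : Measure E)
    [SigmaFinite μ] :
    MeasurePreserving (fun p : (Fin m → E) × E => Fin.snoc (α := fun _ => E) p.1 p.2)
      ((Measure.pi fun _ => μ).prod μ) (Measure.pi fun _ => μ) := by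
  have hinsert := (measurePreserving_piFinSuccAbove (fun _ : Fin (m + 1) => μ) (Fin.last m)).symm
  convert hinsert.comp Measure.measurePreserving_swap using 1
  ext p : 1
  exact (Fin.insertNth_last' p.2 p.1).symm

lemma wishartOffDiag_succ (m : ℕ) (α : Fin d → ℝ) :
    wishartOffDiag (m + 1) d α
      = ((sampleMeasure m d α ⊗ₘ newRowKernel m α).map (Prod.map (wishartMatrix α m) id)).map
          fun p => bordered p.1 p.2 := by
  have hW := measurable_wishartMatrix α m
  have hsnoc := measurePreserving_snoc m (gaussPi d α)
  have hrow := measurable_normalizedData_mulVec (m := m) α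
  rw [newRowKernel, compProd_id_prod_const_map _ _ hrow,
    Measure.map_map (hW.prodMap measurable_id) (by fun_prop),
    Measure.map_map measurable_bordered (by fun_prop)]
  change (Measure.pi fun _ => gaussPi d α).map (wishartMatrix α (m + 1)) = _
  rw [← hsnoc.map_eq, Measure.map_map (measurable_wishartMatrix α _) hsnoc.measurable]
  exact congrArg (Measure.map · _) (funext fun p => wishartMatrix_snoc p.1 p.2)

lemma klDiv_wishartOffDiag_succ_le (m : ℕ) (α : Fin d → ℝ) :
    klDiv (wishartOffDiag (m + 1) d α) (goeOffDiag (m + 1))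
      ≤ klDiv (wishartOffDiag m d α) (goeOffDiag m)
        + ∫⁻ X, klDiv (newRowKernel m α X) (stdGaussPi m) ∂(sampleMeasure m d α) := by
  rw [wishartOffDiag_succ, goeOffDiag_succ]
  have := Measure.isProbabilityMeasure_map
    (μ := sampleMeasure m d α ⊗ₘ newRowKernel m α)
    ((measurable_wishartMatrix α m).prodMap measurable_id).aemeasurable
  exact (klDiv_map_le _ _ measurable_bordered).trans
    (klDiv_map_prodMap_compProd_le _ _ _ _ (measurable_wishartMatrix α m))

lemma klDiv_wishartOffDiag_le_sum (n : ℕ) (α : Fin d → ℝ) :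
    klDiv (wishartOffDiag n d α) (goeOffDiag n)
      ≤ ∑ m ∈ Finset.range n,
          ∫⁻ X, klDiv (newRowKernel m α X) (stdGaussPi m) ∂(sampleMeasure m d α) := by
  induction n with
  | zero =>
    have heq : wishartOffDiag 0 d α = goeOffDiag 0 := by
      ext s
      exact Subsingleton.set_cases (by simp) (by simp) s
    simp [heq]
  | succ n ih =>
    rw [Finset.sum_range_succ]
    exact (klDiv_wishartOffDiag_succ_le n α).trans (by gcongr)

end WishartRecursion

section WishartBound

open InformationTheory

variable {n d : ℕ} {α : Fin d → ℝ}

lemma klDiv_wishartOffDiag_le_of_sum_pow_four {N : ℝ} (hn : n ≠ 0) (hα : ∀ i, 0 ≤ α i)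
    (hnrm : nrm 2 α ≠ 0) (hN_sq : (∑ i, ((α i / nrm 2 α) ^ 2) ^ 2) * N ^ 2 ≤ 1)
    (hnN : 32 * (n * √n) ≤ N) :
    klDiv (wishartOffDiag n d α) (goeOffDiag n)
      ≤ ENNReal.ofReal (n * (32 * (∑ i, ((α i / nrm 2 α) ^ 2) ^ 2) * n ^ 2 + exp (-n))) := by
  have hN : 0 ≤ N := le_trans (by positivity) hnN
  have haN (i : Fin d) : (α i / nrm 2 α) ^ 2 * N ≤ 1 := by
    rw [← sq_le_one_iff₀ (by positivity), mul_pow]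
    refine le_trans ?_ hN_sq
    gcongr
    exact Finset.single_le_sum (f := fun i => ((α i / nrm 2 α) ^ 2) ^ 2)
      (fun _ _ => by positivity) (Finset.mem_univ i)
  have hrow (m : ℕ) (hm : m ∈ Finset.range n) :
      ∫⁻ X, klDiv (newRowKernel m α X) (stdGaussPi m) ∂(sampleMeasure m d α)
        ≤ ENNReal.ofReal (32 * (∑ i, ((α i / nrm 2 α) ^ 2) ^ 2) * n ^ 2 + exp (-n)) := by
    have hmn : m ≤ n := (Finset.mem_range.mp hm).le
    refine lintegral_klDiv_newRowKernel_le hα hnrm ?_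
    rw [lintegral_gaussIntegral_rowCov hα, ← ENNReal.ofReal_one,
      ← ENNReal.ofReal_add zero_le_one (by positivity), ← add_assoc]
    refine (lintegral_prod_inv_sqrt_one_add_le hn hmn (fun i => sq_nonneg _)
      (sum_sq_div_nrm_two_sq hα hnrm) hN_sq haN hnN).trans ?_
    gcongr
  refine ((klDiv_wishartOffDiag_le_sum n α).trans (Finset.sum_le_sum hrow)).trans_eq ?_
  rw [Finset.sum_const, Finset.card_range, nsmul_eq_mul, ← ENNReal.ofReal_natCast,
    ← ENNReal.ofReal_mul (by positivity)]

lemma klDiv_wishartOffDiag_le (hn : n ≠ 0) (hα : ∀ i, 0 ≤ α i)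
    (hR : 1024 ≤ (nrm 2 α / nrm 4 α) ^ 4 / (n : ℝ) ^ 3) :
    klDiv (wishartOffDiag n d α) (goeOffDiag n)
      ≤ ENNReal.ofReal (32 * ((nrm 2 α / nrm 4 α) ^ 4 / (n : ℝ) ^ 3)⁻¹ + n * exp (-n)) := by
  rw [le_div_iff₀ (by positivity)] at hR
  have hR_pos : 0 < (nrm 2 α / nrm 4 α) ^ 4 := lt_of_lt_of_le (by positivity) hR
  have hnrm : nrm 2 α ≠ 0 := fun h => by simp [h] at hR_pos
  have hsum : ∑ i, ((α i / nrm 2 α) ^ 2) ^ 2 = ((nrm 2 α / nrm 4 α) ^ 4)⁻¹ := by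
    simp_rw [← pow_mul, div_pow]
    rw [← Finset.sum_div, ← nrm_pow four_ne_zero hα, inv_div]
  have hnN : 32 * (n * √n) ≤ √((nrm 2 α / nrm 4 α) ^ 4) := by
    refine le_sqrt_of_sq_le (le_of_eq_of_le ?_ hR)
    rw [mul_pow, mul_pow, sq_sqrt (by positivity)]
    ring
  refine (klDiv_wishartOffDiag_le_of_sum_pow_four hn hα hnrm ?_ hnN).trans_eq ?_
  · rw [hsum, sq_sqrt hR_pos.le, inv_mul_cancel₀ hR_pos.ne']
  · rw [hsum, inv_div, div_eq_mul_inv]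
    ring_nf

lemma tendsto_klDiv_wishartOffDiag_zero {d : ℕ → ℕ} {α : (n : ℕ) → Fin (d n) → ℝ}
    (hα : ∀ n i, 0 ≤ α n i)
    (hlim : Tendsto (fun n => (nrm 2 (α n) / nrm 4 (α n)) ^ 4 / (n : ℝ) ^ 3) atTop atTop) :
    Tendsto (fun n => klDiv (wishartOffDiag n (d n) (α n)) (goeOffDiag n)) atTop (nhds 0) := by
  have hexp : Tendsto (fun n : ℕ => (n : ℝ) * exp (-n)) atTop (nhds 0) := by
    simpa [Function.comp_def] using
      (tendsto_pow_mul_exp_neg_atTop_nhds_zero 1).comp tendsto_natCast_atTop_atTop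
  have hbound := ENNReal.tendsto_ofReal
    (((tendsto_inv_atTop_zero.comp hlim).const_mul 32).add hexp)
  simp only [mul_zero, add_zero, ENNReal.ofReal_zero, Function.comp_def] at hbound
  refine tendsto_of_tendsto_of_tendsto_of_le_of_le' tendsto_const_nhds hbound
    (Eventually.of_forall fun _ => zero_le) ?_
  filter_upwards [hlim.eventually_ge_atTop 1024, eventually_ne_atTop 0] with n hn hn0
  exact klDiv_wishartOffDiag_le hn0 (hα n) hn

end WishartBound

section RelEnt

open InformationTheory

lemma relEnt_eq_toReal_klDiv {Ω : Type*} [MeasurableSpace Ω] {μ ν : Measure Ω}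
    [IsProbabilityMeasure μ] [IsProbabilityMeasure ν] (h : klDiv μ ν ≠ ∞) :
    relEnt μ ν = (klDiv μ ν).toReal :=
  (toReal_klDiv_of_measure_eq (klDiv_ne_top_iff.mp h).1 (by simp)).symm

lemma tendsto_relEnt_of_tendsto_klDiv {ι : Type*} {l : Filter ι} {Ω : ι → Type*}
    [∀ i, MeasurableSpace (Ω i)] {μ ν : ∀ i, Measure (Ω i)} [∀ i, IsProbabilityMeasure (μ i)]
    [∀ i, IsProbabilityMeasure (ν i)] (h : Tendsto (fun i => klDiv (μ i) (ν i)) l (nhds 0)) :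
    Tendsto (fun i => relEnt (μ i) (ν i)) l (nhds 0) := by
  refine ((ENNReal.tendsto_toReal ENNReal.zero_ne_top).comp h).congr' ?_
  filter_upwards [h.eventually_ne ENNReal.zero_ne_top] with i hi
  exact (relEnt_eq_toReal_klDiv hi).symm

end RelEnt

theorem relEnt_tendsto_zero_general (d : ℕ → ℕ) (α : (n : ℕ) → Fin (d n) → ℝ)
    (hα : ∀ n i, 0 ≤ α n i)
    (hlim : Tendsto (fun n => (nrm 2 (α n) / nrm 4 (α n)) ^ 4 / (n : ℝ) ^ 3) atTop atTop) :
    Tendsto (fun n => relEnt (wishartOffDiag n (d n) (α n)) (goeOffDiag n)) atTop (nhds 0) :=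
  tendsto_relEnt_of_tendsto_klDiv (tendsto_klDiv_wishartOffDiag_zero hα hlim)

/-- Theorem 6. If `(‖α‖₂/‖α‖₄)⁴ / n³ → ∞`, then
`Ent[W(n,α) ‖ M(n)] → 0`. -/
theorem relEnt_tendsto_zero (p : ℝ) (hp : p ∈ Set.Ioo (0 : ℝ) 1)
    (d : ℕ → ℕ) (α : (n : ℕ) → Fin (d n) → ℝ)
    (hα : ∀ n i, α n i ∈ Set.Icc (0 : ℝ) 1)
    (hmax : ∀ n, ∃ i, α n i = 1)
    (hlim : Tendsto (fun n => (nrm 2 (α n) / nrm 4 (α n)) ^ 4 / (n : ℝ) ^ 3)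
      atTop atTop) :
    Tendsto (fun n => relEnt (wishartOffDiag n (d n) (α n)) (goeOffDiag n))
      atTop (nhds 0) :=
  relEnt_tendsto_zero_general d α (fun n i => (hα n i).1) hlim

end
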